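/- Let Ω ⊆ Q be a closed axis-parallel cube with positive volume. Then for all sufficiently large n, for every minimizer Y_n of the quantization energy among subsets of Q with n points, the total energy contribution of the Voronoi cells intersecting ∂Ω satisfies Σ_{y ∈ Y_n, V_y ∩ ∂Ω ≠ ∅} ∫_{V_y} |x − y|² dx ≤ (3Γ₄⁶/(4Γ₅³))·n^{−1}, where Γ₄ := (2·12^{1/4}·16^{1/3}/(π^{1/4}·ω₃^{1/12}))·(√(1 + 2⁴·3³/(5²·10³)) − 1)^{−1/2}·(5²·10³/(2²·3³))^{1/4}, Γ₅ := (1/4)·(√(1 + 2⁴·3³/(5²·10³)) − 1)·Γ₃, Γ₃ := ω₃^{−1/5}·Γ₁^{1/5}, Γ₁ := (2/5)^{2/3}/40. -/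

import Mathlib

open MeasureTheory

noncomputable section

/-- Euclidean 3-space. -/
abbrev E3 := EuclideanSpace ℝ (Fin 3)

/-- The closed unit cube Q = [0,1]³. -/
def Qcube : Set E3 := {x | ∀ i, x i ∈ Set.Icc (0 : ℝ) 1}

/-- The quantization energy E(Y) = ∫_Q dist(x,Y)² dx. -/
def quantE (Y : Finset E3) : ℝ := ∫ x in Qcube, (Metric.infDist x (↑Y : Set E3)) ^ 2

/-- The Voronoi cell of a generator y ∈ Y, relative to Q. -/
def vorCell (Y : Finset E3) (y : E3) : Set E3 :=
  {x ∈ Qcube | ∀ z ∈ Y, dist x y ≤ dist x z}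

/-- Y is a minimizer of the quantization energy among n-point subsets of Q. -/
def IsMinimizer (n : ℕ) (Y : Finset E3) : Prop :=
  (↑Y : Set E3) ⊆ Qcube ∧ Y.card = n ∧
    ∀ Z : Finset E3, (↑Z : Set E3) ⊆ Qcube → Z.card = n → quantE Y ≤ quantE Z

/-- ω₃ = 4π/3, the volume of the unit ball in ℝ³. -/
def omega3 : ℝ := 4 * Real.pi / 3

/-- Γ₁ = (2/5)^{2/3} / 40. -/
def Gamma1 : ℝ := ((2 / 5 : ℝ) ^ ((2 : ℝ) / 3)) / 40

/-- Γ₃ = ω₃^{-1/5} Γ₁^{1/5}. -/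
def Gamma3 : ℝ := omega3 ^ (-(1 : ℝ) / 5) * Gamma1 ^ ((1 : ℝ) / 5)

/-- Γ₅ = (1/4)(√(1 + 2⁴·3³/(5²·10³)) − 1) Γ₃. -/
def Gamma5 : ℝ :=
  (1 / 4) * (Real.sqrt (1 + (2 ^ 4 * 3 ^ 3 : ℝ) / (5 ^ 2 * 10 ^ 3)) - 1) * Gamma3

/-- Γ₄, the diameter upper-bound constant. -/
def Gamma4 : ℝ :=
  (2 * (12 : ℝ) ^ ((1 : ℝ) / 4) * (16 : ℝ) ^ ((1 : ℝ) / 3) /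
      (Real.pi ^ ((1 : ℝ) / 4) * omega3 ^ ((1 : ℝ) / 12))) *
    (Real.sqrt (1 + (2 ^ 4 * 3 ^ 3 : ℝ) / (5 ^ 2 * 10 ^ 3)) - 1) ^ (-(1 : ℝ) / 2) *
    ((5 ^ 2 * 10 ^ 3 : ℝ) / (2 ^ 2 * 3 ^ 3)) ^ ((1 : ℝ) / 4)


/-! ### Helper lemmas -/

def boxS (lo hi : Fin 3 → ℝ) : Set E3 := {x | ∀ i, x i ∈ Set.Icc (lo i) (hi i)}

lemma boxS_eq (lo hi : Fin 3 → ℝ) :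
    boxS lo hi = (WithLp.ofLp : E3 → (Fin 3 → ℝ)) ⁻¹' (Set.Icc lo hi) := by
  ext x
  simp only [boxS, Set.mem_setOf_eq, Set.mem_preimage, Set.mem_Icc, Pi.le_def]
  exact ⟨fun h => ⟨fun i => (h i).1, fun i => (h i).2⟩, fun h i => ⟨h.1 i, h.2 i⟩⟩

lemma boxS_closed (lo hi : Fin 3 → ℝ) : IsClosed (boxS lo hi) := by
  rw [boxS_eq]
  exact isClosed_Icc.preimage (PiLp.continuous_ofLp 2 _)

lemma boxS_volume (lo hi : Fin 3 → ℝ) :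
    volume (boxS lo hi) = ∏ i, ENNReal.ofReal (hi i - lo i) := by
  rw [boxS_eq, (PiLp.volume_preserving_ofLp (Fin 3)).measure_preimage
    measurableSet_Icc.nullMeasurableSet, Real.volume_Icc_pi]

lemma boxS_real (lo hi : Fin 3 → ℝ) (h : ∀ i, lo i ≤ hi i) :
    volume.real (boxS lo hi) = ∏ i, (hi i - lo i) := by
  rw [Measure.real, boxS_volume, ENNReal.toReal_prod]
  exact Finset.prod_congr rfl fun i _ => ENNReal.toReal_ofReal (by linarith [h i])

lemma Qcube_eq : Qcube = boxS (fun _ => 0) (fun _ => 1) := rfl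

lemma Qcube_vol : volume Qcube = 1 := by
  rw [Qcube_eq, boxS_volume]; simp

lemma Qcube_closed : IsClosed Qcube := boxS_closed _ _

lemma Qcube_real : volume.real Qcube = 1 := by
  rw [Measure.real, Qcube_vol]; simp

lemma Qcube_compact : IsCompact Qcube := by
  have h1 : Qcube = (WithLp.toLp 2 : (Fin 3 → ℝ) → E3) '' (Set.Icc (fun _ => 0) (fun _ => 1)) := by
    rw [Qcube_eq, boxS_eq]
    ext x
    constructor
    · intro h
      exact ⟨x.ofLp, h, rfl⟩
    · rintro ⟨v, hv, rfl⟩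
      exact hv
  rw [h1]
  exact isCompact_Icc.image (PiLp.continuous_toLp 2 _)

lemma vorCell_closed (Y : Finset E3) (y : E3) : IsClosed (vorCell Y y) := by
  have : vorCell Y y = Qcube ∩ ⋂ z ∈ Y, {x | dist x y ≤ dist x z} := by
    ext x; simp [vorCell]
  rw [this]
  refine Qcube_closed.inter (isClosed_biInter fun z _ => ?_)
  exact isClosed_le (by fun_prop) (by fun_prop)

lemma vorCell_sub (Y : Finset E3) (y : E3) : vorCell Y y ⊆ Qcube := fun _ h => h.1

lemma vor_infDist {Y : Finset E3} {y x : E3} (hy : y ∈ Y) (hx : x ∈ vorCell Y y) :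
    dist x y = Metric.infDist x (↑Y : Set E3) := by
  apply le_antisymm
  · exact (Metric.le_infDist ⟨y, hy⟩).2 fun {z} hz => hx.2 z hz
  · exact Metric.infDist_le_dist_of_mem hy

lemma vor_aedisj {Y : Finset E3} {y z : E3} (hy : y ∈ Y) (hz : z ∈ Y) (h : y ≠ z) :
    AEDisjoint volume (vorCell Y y) (vorCell Y z) := by
  have h0 : volume ((AffineSubspace.perpBisector y z : AffineSubspace ℝ E3) : Set E3) = 0 := by
    apply Measure.addHaar_affineSubspace
    rw [Ne, AffineSubspace.perpBisector_eq_top]; exact h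
  refine measure_mono_null ?_ h0
  rintro x ⟨h1, h2⟩
  exact AffineSubspace.mem_perpBisector_iff_dist_eq.2 (le_antisymm (h1.2 z hz) (h2.2 y hy))

lemma sum_vor_eq {Y : Finset E3} {g : E3 → ℝ} (hg : IntegrableOn g Qcube) (S : Finset E3)
    (hS : S ⊆ Y) :
    ∑ y ∈ S, ∫ x in vorCell Y y, g x = ∫ x in ⋃ y ∈ S, vorCell Y y, g x := by
  classical
  induction S using Finset.induction_on with
  | empty => simp
  | insert a s ha ih =>
    have hsY : s ⊆ Y := fun x hx => hS (Finset.mem_insert_of_mem hx)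
    rw [Finset.sum_insert ha, ih hsY, Finset.set_biUnion_insert, setIntegral_union₀]
    · rw [AEDisjoint, Set.inter_iUnion₂]
      refine (measure_biUnion_null_iff s.countable_toSet).2 fun b hb => ?_
      exact vor_aedisj (hS (Finset.mem_insert_self _ _)) (hsY hb) (fun e => ha (e ▸ hb))
    · exact (Finset.measurableSet_biUnion _ fun b _ => (vorCell_closed Y b).measurableSet).nullMeasurableSet
    · exact hg.mono_set (vorCell_sub Y a)
    · exact hg.mono_set (Set.iUnion₂_subset fun b _ => vorCell_sub Y b)

lemma sum_vor_le {Y : Finset E3} {g : E3 → ℝ} (hg : IntegrableOn g Qcube) (hg0 : ∀ x, 0 ≤ g x)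
    (S : Finset E3) (hS : S ⊆ Y) (T : Set E3) (hT : T ⊆ Qcube)
    (hST : ∀ y ∈ S, vorCell Y y ⊆ T) :
    ∑ y ∈ S, ∫ x in vorCell Y y, g x ≤ ∫ x in T, g x := by
  rw [sum_vor_eq hg S hS]
  refine setIntegral_mono_set (hg.mono_set hT) (Filter.Eventually.of_forall hg0) ?_
  exact (Set.iUnion₂_subset hST).eventuallyLE

lemma infDist_sq_cont (Y : Finset E3) :
    Continuous fun x => (Metric.infDist x (↑Y : Set E3)) ^ 2 :=
  (Metric.continuous_infDist_pt _).pow 2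

lemma infDist_sq_int (Y : Finset E3) :
    IntegrableOn (fun x => (Metric.infDist x (↑Y : Set E3)) ^ 2) Qcube :=
  (infDist_sq_cont Y).continuousOn.integrableOn_compact Qcube_compact

lemma dist_le_of_coord (x y : E3) (t : ℝ) (ht : 0 ≤ t) (h : ∀ i, |x i - y i| ≤ t) :
    dist x y ^ 2 ≤ 3 * t ^ 2 := by
  rw [EuclideanSpace.dist_eq, Real.sq_sqrt (by positivity)]
  calc ∑ i, dist (x i) (y i) ^ 2 ≤ ∑ i : Fin 3, t ^ 2 :=
        Finset.sum_le_sum fun i _ => by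
          rw [Real.dist_eq]; exact pow_le_pow_left₀ (abs_nonneg _) (h i) 2
    _ = 3 * t ^ 2 := by simp

lemma coord_le_dist (x y : E3) (i : Fin 3) : |x i - y i| ≤ dist x y := by
  rw [dist_eq_norm, ← Real.norm_eq_abs]
  exact PiLp.norm_apply_le (x - y) i

lemma cellMap (m : ℕ) (hm : 0 < m) : ∃ c : E3 → (Fin 3 → Fin m), ∀ x ∈ Qcube, ∀ i,
    ((c x i : ℕ) : ℝ) / m ≤ x i ∧ x i ≤ ((c x i : ℕ) : ℝ) / m + 1 / m := by
  have key : ∀ t : ℝ, ∃ k : Fin m, t ∈ Set.Icc (0:ℝ) 1 →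
      ((k : ℕ) : ℝ) / m ≤ t ∧ t ≤ ((k : ℕ) : ℝ) / m + 1 / m := by
    intro t
    have hm' : (0:ℝ) < m := by exact_mod_cast hm
    by_cases h1 : t ∈ Set.Icc (0:ℝ) 1
    · by_cases h2 : t < 1
      · have hf : ⌊t * m⌋₊ < m := by
          rw [Nat.floor_lt (by have := h1.1; positivity)]
          nlinarith
        refine ⟨⟨⌊t * m⌋₊, hf⟩, fun _ => ?_⟩
        have a1 := Nat.floor_le (a := t * m) (by have := h1.1; positivity)
        have a2 := Nat.lt_floor_add_one (t * m)
        constructor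
        · rw [div_le_iff₀ hm']; exact a1
        · rw [← add_div, le_div_iff₀ hm']; exact a2.le
      · have ht : t = 1 := le_antisymm h1.2 (not_lt.1 h2)
        refine ⟨⟨m - 1, by omega⟩, fun _ => ?_⟩
        have : ((m - 1 : ℕ) : ℝ) = m - 1 := by
          rw [Nat.cast_sub hm]; simp
        simp only [this, ht]
        constructor
        · rw [div_le_iff₀ hm']; linarith
        · rw [← add_div, le_div_iff₀ hm']; linarith
    · exact ⟨⟨0, hm⟩, fun h => absurd h h1⟩
  choose k hk using key
  exact ⟨fun x i => k (x i), fun x hx i => hk _ (hx i)⟩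

lemma cell_dist {m : ℕ} (hm : 0 < m) {c : E3 → (Fin 3 → Fin m)}
    (hc : ∀ x ∈ Qcube, ∀ i,
    ((c x i : ℕ) : ℝ) / m ≤ x i ∧ x i ≤ ((c x i : ℕ) : ℝ) / m + 1 / m) {x y : E3}
    (hx : x ∈ Qcube) (hy : y ∈ Qcube) (h : c x = c y) : dist x y ^ 2 ≤ 3 / (m:ℝ) ^ 2 := by
  have := dist_le_of_coord x y (1 / m) (by positivity) (fun i => by
    have h1 := hc x hx i
    have h2 := hc y hy i
    rw [h] at h1
    rw [abs_le]; constructor <;> linarith)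
  calc _ ≤ _ := this
    _ = _ := by ring

lemma Qcube_infinite : Qcube.Infinite := by
  intro h
  have := h.measure_zero (volume : Measure E3)
  rw [Qcube_vol] at this
  exact one_ne_zero this

lemma energy_bound {n m : ℕ} (hm : 0 < m) (hmn : m ^ 3 ≤ n) {Y : Finset E3}
    (hY : IsMinimizer n Y) : quantE Y ≤ 3 / (m:ℝ) ^ 2 := by
  classical
  obtain ⟨c, hc⟩ := cellMap m hm
  have hm' : (0:ℝ) < m := by exact_mod_cast hm
  let p : (Fin 3 → Fin m) → E3 := fun k => WithLp.toLp 2 (fun i => ((k i : ℕ) : ℝ) / m)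
  let G : Finset E3 := Finset.univ.image p
  have hGQ : (↑G : Set E3) ⊆ Qcube := by
    intro x hx
    simp only [G, Finset.coe_image, Finset.coe_univ, Set.image_univ, Set.mem_range] at hx
    obtain ⟨k, rfl⟩ := hx
    intro i
    have : ((k i : ℕ) : ℝ) ≤ m := by exact_mod_cast (k i).2.le
    refine ⟨?_, ?_⟩
    · show 0 ≤ ((k i : ℕ) : ℝ) / m
      positivity
    · show ((k i : ℕ) : ℝ) / m ≤ 1
      rw [div_le_one hm']; exact this
  have hGc : (↑G : Set E3).ncard ≤ n := by
    rw [Set.ncard_coe_finset]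
    calc G.card ≤ (Finset.univ : Finset (Fin 3 → Fin m)).card := Finset.card_image_le
      _ = m ^ 3 := by simp
      _ ≤ n := hmn
  have hn : 0 < n := lt_of_lt_of_le (by positivity) hmn
  obtain ⟨s, hGs, hsQ, hsn⟩ := Qcube_infinite.exists_superset_ncard_eq hGQ G.finite_toSet hGc
  have hsf : s.Finite := Set.finite_of_ncard_pos (by omega)
  lift s to Finset E3 using hsf
  rw [Set.ncard_coe_finset] at hsn
  refine (hY.2.2 s hsQ hsn).trans ?_
  unfold quantE
  calc ∫ x in Qcube, (Metric.infDist x (↑s : Set E3)) ^ 2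
      ≤ ∫ x in Qcube, 3 / (m:ℝ) ^ 2 := by
        refine setIntegral_mono_on (infDist_sq_int s) ?_ Qcube_closed.measurableSet ?_
        · exact integrableOn_const (by rw [Qcube_vol]; simp)
        · intro x hx
          have hp : p (c x) ∈ (↑s : Set E3) := hGs (by simp [G])
          have h1 := Metric.infDist_le_dist_of_mem (x := x) hp
          calc _ ≤ dist x (p (c x)) ^ 2 := pow_le_pow_left₀ Metric.infDist_nonneg h1 2
            _ ≤ 3 * (1 / m) ^ 2 := dist_le_of_coord _ _ _ (by positivity) (fun i => by
                have h1 := hc x hx i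
                show |x i - ((c x i : ℕ) : ℝ) / m| ≤ 1 / m
                rw [abs_le]
                have : (0:ℝ) < 1 / m := by positivity
                constructor <;> linarith)
            _ = _ := by ring
    _ = 3 / (m:ℝ) ^ 2 := by
        rw [setIntegral_const, Qcube_real]; simp

lemma exists_cheap {n m : ℕ} (hm : 0 < m) (hmn : 2 * m ^ 3 ≤ n) {Y : Finset E3}
    (hY : IsMinimizer n Y) : ∃ y ∈ Y, (∃ z ∈ Y, z ≠ y ∧ dist y z ^ 2 ≤ 3 / (m:ℝ) ^ 2) ∧
      ∫ x in vorCell Y y, ((Metric.infDist x (↑Y : Set E3)) ^ 2 + 6 / (m:ℝ) ^ 2)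
        ≤ 9 / (m:ℝ) ^ 5 := by
  classical
  obtain ⟨c, hc⟩ := cellMap m hm
  have hm' : (0:ℝ) < m := by exact_mod_cast hm
  let S := Y.filter (fun y => ∃ z ∈ Y, z ≠ y ∧ c y = c z)
  let N := Y.filter (fun y => ¬ ∃ z ∈ Y, z ≠ y ∧ c y = c z)
  have hN : N.card ≤ m ^ 3 := by
    calc N.card ≤ (Finset.univ : Finset (Fin 3 → Fin m)).card := by
          refine Finset.card_le_card_of_injOn c (fun _ _ => by simp) ?_
          intro x hx y hy hxy
          by_contra hne
          have hx' := (Finset.mem_filter.1 hx).2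
          exact hx' ⟨y, (Finset.mem_filter.1 hy).1, fun e => hne e.symm, hxy⟩
      _ = m ^ 3 := by simp
  have hSN : S.card + N.card = n := by
    rw [← hY.2.1]; exact Finset.card_filter_add_card_filter_not _
  have hScard : m ^ 3 ≤ S.card := by omega
  have hSne : S.Nonempty := Finset.card_pos.1 (lt_of_lt_of_le (by positivity) hScard)
  have hint : IntegrableOn (fun _ : E3 => 6 / (m:ℝ) ^ 2) Qcube :=
    integrableOn_const (by rw [Qcube_vol]; simp)
  have hsum := sum_vor_le (Y := Y)
    (g := fun x => (Metric.infDist x (↑Y : Set E3)) ^ 2 + 6 / (m:ℝ) ^ 2)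
    ((infDist_sq_int Y).add hint) (fun x => by positivity) S (Finset.filter_subset _ _) Qcube
    subset_rfl (fun y _ => vorCell_sub Y y)
  have htot : ∫ x in Qcube, ((Metric.infDist x (↑Y : Set E3)) ^ 2 + 6 / (m:ℝ) ^ 2)
      ≤ 9 / (m:ℝ) ^ 2 := by
    rw [integral_add (infDist_sq_int Y) hint, setIntegral_const, Qcube_real]
    have := energy_bound hm (by omega) hY
    unfold quantE at this
    have e : 9 / (m:ℝ) ^ 2 = 3 / (m:ℝ) ^ 2 + 6 / (m:ℝ) ^ 2 := by ring
    rw [e]; simpa using this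
  obtain ⟨y, hyS, hy⟩ := Finset.exists_le_of_sum_le
    (f := fun y => ∫ x in vorCell Y y, ((Metric.infDist x (↑Y : Set E3)) ^ 2 + 6 / (m:ℝ) ^ 2))
    (g := fun _ => 9 / (m:ℝ) ^ 5) hSne (by
      refine (hsum.trans htot).trans ?_
      rw [Finset.sum_const, nsmul_eq_mul]
      have h3 : ((m:ℝ)) ^ 3 ≤ S.card := by exact_mod_cast hScard
      calc 9 / (m:ℝ) ^ 2 = (m:ℝ) ^ 3 * (9 / (m:ℝ) ^ 5) := by field_simp
        _ ≤ _ := by gcongr)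
  obtain ⟨hyY, z, hzY, hzy, hcz⟩ := Finset.mem_filter.1 hyS
  exact ⟨y, hyY, ⟨z, hzY, hzy, cell_dist hm hc (hY.1 hyY) (hY.1 hzY) hcz⟩, hy⟩

lemma radius_bound {n m : ℕ} (hm : 0 < m) (hmn : 2 * m ^ 3 ≤ n) {Y : Finset E3}
    (hY : IsMinimizer n Y) {x0 : E3} (hx0 : x0 ∈ Qcube) :
    Metric.infDist x0 (↑Y : Set E3) ≤ 7 / m := by
  classical
  have hm' : (0:ℝ) < m := by exact_mod_cast hm
  obtain ⟨y, hyY, ⟨z, hzY, hzy, hyz⟩, hcost⟩ := exists_cheap hm hmn hY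
  set R := Metric.infDist x0 (↑Y : Set E3) with hR
  have hR0 : 0 ≤ R := Metric.infDist_nonneg
  rcases hR0.eq_or_lt with h0 | hRpos
  · rw [← h0]; positivity
  have hx0Y : x0 ∉ Y := by
    intro h
    have : R = 0 := Metric.infDist_zero_of_mem h
    linarith
  have hR2 : R ≤ 2 := by
    have h1 : R ≤ dist x0 y := Metric.infDist_le_dist_of_mem hyY
    have h2 := dist_le_of_coord x0 y 1 zero_le_one (fun i => by
      have a1 := hx0 i
      have a2 := hY.1 hyY i
      rw [abs_le]; constructor <;> linarith [a1.1, a1.2, a2.1, a2.2])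
    nlinarith
  let Z : Finset E3 := insert x0 (Y.erase y)
  have hZQ : (↑Z : Set E3) ⊆ Qcube := by
    intro x hx
    rcases Finset.mem_insert.1 (Finset.mem_coe.1 hx) with rfl | h
    · exact hx0
    · exact hY.1 (Finset.mem_of_mem_erase h)
  have hZn : Z.card = n := by
    rw [Finset.card_insert_of_notMem (fun h => hx0Y (Finset.mem_of_mem_erase h)),
      Finset.card_erase_add_one hyY, hY.2.1]
  have hmin := hY.2.2 Z hZQ hZn
  let lo : Fin 3 → ℝ := fun i => if x0 i ≤ 1 / 2 then x0 i else x0 i - R / 8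
  let hi : Fin 3 → ℝ := fun i => lo i + R / 8
  let B := boxS lo hi
  have hBm : MeasurableSet B := (boxS_closed lo hi).measurableSet
  have hBQ : B ⊆ Qcube := by
    intro x hx i
    have h1 := hx i
    have h2 := hx0 i
    simp only [hi, lo, Set.mem_Icc] at h1 h2 ⊢
    split_ifs at h1 <;> constructor <;> linarith [h1.1, h1.2, h2.1, h2.2]
  have hBd : ∀ x ∈ B, dist x x0 ≤ R / 4 := by
    intro x hx
    have := dist_le_of_coord x x0 (R / 8) (by positivity) (fun i => by
      have h1 := hx i
      simp only [hi, lo, Set.mem_Icc] at h1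
      rw [abs_le]
      split_ifs at h1 <;> constructor <;> linarith [h1.1, h1.2])
    nlinarith [dist_nonneg (x := x) (y := x0)]
  have hBv : volume.real B = (R / 8) ^ 3 := by
    rw [boxS_real lo hi (fun i => by simp only [hi]; linarith)]
    simp [hi]
    ring
  have hBf : volume B ≠ ⊤ := by
    refine ((measure_mono hBQ).trans_lt ?_).ne
    rw [Qcube_vol]; simp
  have hVm := (vorCell_closed Y y).measurableSet
  let g : E3 → ℝ := fun x => (Metric.infDist x (↑Y : Set E3)) ^ 2 + 6 / (m:ℝ) ^ 2
  have hg0 : ∀ x, 0 ≤ g x := fun x => by positivity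
  have hgint : IntegrableOn g Qcube :=
    ((infDist_sq_cont Y).add continuous_const).continuousOn.integrableOn_compact Qcube_compact
  have hpt : ∀ x ∈ Qcube, (Metric.infDist x (↑Z : Set E3)) ^ 2
      + B.indicator (fun _ => R ^ 2 / 2) x
      ≤ (Metric.infDist x (↑Y : Set E3)) ^ 2 + (vorCell Y y).indicator g x := by
    intro x hx
    have hind : 0 ≤ (vorCell Y y).indicator g x := Set.indicator_nonneg (fun x _ => hg0 x) x
    have hZ0 : 0 ≤ Metric.infDist x (↑Z : Set E3) := Metric.infDist_nonneg
    by_cases hxB : x ∈ B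
    · rw [Set.indicator_of_mem hxB]
      have h1 : Metric.infDist x (↑Z : Set E3) ≤ dist x x0 :=
        Metric.infDist_le_dist_of_mem (by simp [Z])
      have h2 := hBd x hxB
      have h3 : R ≤ Metric.infDist x (↑Y : Set E3) + dist x0 x :=
        Metric.infDist_le_infDist_add_dist
      rw [dist_comm] at h3
      nlinarith
    · rw [Set.indicator_of_notMem hxB, add_zero]
      by_cases hxV : x ∈ vorCell Y y
      · rw [Set.indicator_of_mem hxV]
        have h1 : Metric.infDist x (↑Z : Set E3) ≤ dist x z :=
          Metric.infDist_le_dist_of_mem (by simp [Z, hzY, hzy])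
        have h2 := dist_triangle x y z
        have h3 := vor_infDist hyY hxV
        simp only [g]
        rw [← h3]
        have h4 : 6 / (m:ℝ) ^ 2 = 2 * (3 / (m:ℝ) ^ 2) := by ring
        rw [h4]
        have h5 : Metric.infDist x (↑Z : Set E3) ≤ dist x y + dist y z := h1.trans h2
        have h6 : Metric.infDist x (↑Z : Set E3) ^ 2 ≤ (dist x y + dist y z) ^ 2 :=
          pow_le_pow_left₀ hZ0 h5 2
        nlinarith [sq_nonneg (dist x y - dist y z)]
      · rw [Set.indicator_of_notMem hxV, add_zero]
        obtain ⟨w, hwY, hw⟩ := Y.finite_toSet.isCompact.exists_infDist_eq_dist ⟨y, hyY⟩ x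
        have hwy : w ≠ y := by
          rintro rfl
          exact hxV ⟨hx, fun z hz => hw ▸ Metric.infDist_le_dist_of_mem hz⟩
        rw [hw]
        refine pow_le_pow_left₀ hZ0 (Metric.infDist_le_dist_of_mem ?_) 2
        have hwY' : w ∈ Y := hwY
        simp [Z, hwy, hwY']
  have hi1 : IntegrableOn (B.indicator (fun _ => R ^ 2 / 2)) Qcube :=
    IntegrableOn.indicator (integrableOn_const (by rw [Qcube_vol]; simp)) hBm
  have hi2 : IntegrableOn ((vorCell Y y).indicator g) Qcube := IntegrableOn.indicator hgint hVm
  have hI := setIntegral_mono_on ((infDist_sq_int Z).add hi1) ((infDist_sq_int Y).add hi2)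
    Qcube_closed.measurableSet hpt
  simp only [Pi.add_apply] at hI
  rw [integral_add (infDist_sq_int Z) hi1, integral_add (infDist_sq_int Y) hi2,
    setIntegral_indicator hBm, setIntegral_indicator hVm,
    Set.inter_eq_self_of_subset_right hBQ, Set.inter_eq_self_of_subset_right (vorCell_sub Y y),
    setIntegral_const, hBv, smul_eq_mul] at hI
  unfold quantE at hmin
  have hfin : (R / 8) ^ 3 * (R ^ 2 / 2) ≤ 9 / (m:ℝ) ^ 5 := by
    simp only [g] at hI
    linarith
  have h5 : (R * m) ^ 5 ≤ 7 ^ 5 := by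
    have h6 : (R / 8) ^ 3 * (R ^ 2 / 2) * (m:ℝ) ^ 5 ≤ 9 := by
      rwa [le_div_iff₀ (by positivity)] at hfin
    have h7 : (R * m) ^ 5 = 1024 * ((R / 8) ^ 3 * (R ^ 2 / 2) * (m:ℝ) ^ 5) := by ring
    rw [h7]; linarith
  rw [le_div_iff₀ hm']
  exact le_of_pow_le_pow_left₀ (by norm_num) (by norm_num) h5

lemma frontier_coord {a : E3} {L : ℝ} {p : E3}
    (hp : p ∈ frontier {x : E3 | ∀ i, x i ∈ Set.Icc (a i) (a i + L)}) :
    ∃ i, p i = a i ∨ p i = a i + L := by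
  have hcl : IsClosed {x : E3 | ∀ i, x i ∈ Set.Icc (a i) (a i + L)} :=
    boxS_closed (fun i => a i) (fun i => a i + L)
  rw [hcl.frontier_eq] at hp
  by_contra hcon
  push Not at hcon
  apply hp.2
  have hop : IsOpen {x : E3 | ∀ i, x i ∈ Set.Ioo (a i) (a i + L)} := by
    have : {x : E3 | ∀ i, x i ∈ Set.Ioo (a i) (a i + L)}
        = ⋂ i, (fun x : E3 => x i) ⁻¹' Set.Ioo (a i) (a i + L) := by
      ext x; simp
    rw [this]
    exact isOpen_iInter_of_finite fun i => isOpen_Ioo.preimage (by fun_prop)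
  refine interior_maximal (fun x hx i => ⟨(hx i).1.le, (hx i).2.le⟩) hop ?_
  intro i
  exact ⟨lt_of_le_of_ne (hp.1 i).1 (hcon i).1.symm, lt_of_le_of_ne (hp.1 i).2 (hcon i).2⟩

def slabS (i : Fin 3) (t δ : ℝ) : Set E3 :=
  boxS (Function.update (fun _ => 0) i (t - δ)) (Function.update (fun _ => 1) i (t + δ))

lemma slabS_real (i : Fin 3) (t δ : ℝ) (hδ : 0 ≤ δ) : volume.real (slabS i t δ) = 2 * δ := by
  unfold slabS
  rw [boxS_real]
  · fin_cases i <;> simp [Fin.prod_univ_three, Function.update_apply] <;> ring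
  · intro j
    by_cases h : j = i
    · subst h; simp; linarith
    · simp [h]

lemma slabS_top (i : Fin 3) (t δ : ℝ) : volume (slabS i t δ) ≠ ⊤ := by
  unfold slabS
  rw [boxS_volume]
  exact ENNReal.prod_ne_top fun i _ => ENNReal.ofReal_ne_top

lemma mem_slabS {i : Fin 3} {t δ : ℝ} {x : E3} (hx : x ∈ Qcube) (h : |x i - t| ≤ δ) :
    x ∈ slabS i t δ := by
  intro j
  by_cases hj : j = i
  · subst hj
    rw [abs_le] at h
    simp only [Function.update_self, Set.mem_Icc]
    constructor <;> linarith
  · simpa [hj] using hx j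

lemma const_bound : (131712 : ℝ) ≤ 3 * Gamma4 ^ 6 / (4 * Gamma5 ^ 3) := by
  have hpi := Real.pi_gt_three
  have hpi4 := Real.pi_lt_four
  have hom : 1 ≤ omega3 := by unfold omega3; linarith
  have hom2 : omega3 ≤ 16 := by unfold omega3; linarith
  set s := Real.sqrt (1 + (2 ^ 4 * 3 ^ 3 : ℝ) / (5 ^ 2 * 10 ^ 3)) - 1 with hs
  have hs1 : s ≤ 1 / 100 := by
    have : Real.sqrt (1 + (2 ^ 4 * 3 ^ 3 : ℝ) / (5 ^ 2 * 10 ^ 3)) ≤ 1 + 1 / 100 :=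
      Real.sqrt_le_iff.2 ⟨by norm_num, by norm_num⟩
    linarith
  have hs0 : 0 < s := by
    have : 1 < Real.sqrt (1 + (2 ^ 4 * 3 ^ 3 : ℝ) / (5 ^ 2 * 10 ^ 3)) :=
      Real.lt_sqrt_of_sq_lt (by norm_num)
    linarith
  have hG1 : 0 < Gamma1 := by unfold Gamma1; positivity
  have hG1' : Gamma1 ≤ 1 := by
    unfold Gamma1
    have : (2 / 5 : ℝ) ^ ((2 : ℝ) / 3) ≤ 1 :=
      Real.rpow_le_one (by norm_num) (by norm_num) (by norm_num)
    linarith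
  have hG3 : 0 < Gamma3 := by
    unfold Gamma3
    have : 0 < omega3 := by linarith
    positivity
  have hG3' : Gamma3 ≤ 1 := by
    unfold Gamma3
    have h1 : omega3 ^ (-(1 : ℝ) / 5) ≤ 1 := Real.rpow_le_one_of_one_le_of_nonpos hom (by norm_num)
    have h2 : Gamma1 ^ ((1 : ℝ) / 5) ≤ 1 := Real.rpow_le_one hG1.le hG1' (by norm_num)
    exact mul_le_one₀ h1 (by positivity) h2
  have hG5 : 0 < Gamma5 := by unfold Gamma5; rw [← hs]; positivity
  have hG5' : Gamma5 ≤ 1 / 400 := by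
    unfold Gamma5; rw [← hs]
    nlinarith
  have hG4 : 1 ≤ Gamma4 := by
    unfold Gamma4; rw [← hs]
    have h1 : Real.pi ^ ((1 : ℝ) / 4) ≤ (12 : ℝ) ^ ((1 : ℝ) / 4) :=
      Real.rpow_le_rpow (by linarith) (by linarith) (by norm_num)
    have h2 : omega3 ^ ((1 : ℝ) / 12) ≤ (16 : ℝ) ^ ((1 : ℝ) / 3) :=
      (Real.rpow_le_rpow (by linarith) hom2 (by norm_num)).trans
        (Real.rpow_le_rpow_of_exponent_le (by norm_num) (by norm_num))
    have hp1 : 0 < Real.pi ^ ((1 : ℝ) / 4) := by positivity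
    have hp2 : 0 < omega3 ^ ((1 : ℝ) / 12) := Real.rpow_pos_of_pos (by linarith) _
    have h3 : 1 ≤ 2 * (12 : ℝ) ^ ((1 : ℝ) / 4) * (16 : ℝ) ^ ((1 : ℝ) / 3) /
      (Real.pi ^ ((1 : ℝ) / 4) * omega3 ^ ((1 : ℝ) / 12)) := by
      rw [one_le_div (by positivity)]
      have := mul_le_mul h1 h2 hp2.le (by positivity)
      have h0 : 0 < (12 : ℝ) ^ ((1 : ℝ) / 4) * (16 : ℝ) ^ ((1 : ℝ) / 3) := by positivity
      linarith
    have h4 : 1 ≤ s ^ (-(1 : ℝ) / 2) :=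
      Real.one_le_rpow_of_pos_of_le_one_of_nonpos hs0 (by linarith) (by norm_num)
    have h5 : 1 ≤ ((5 ^ 2 * 10 ^ 3 : ℝ) / (2 ^ 2 * 3 ^ 3)) ^ ((1 : ℝ) / 4) :=
      Real.one_le_rpow (by norm_num) (by norm_num)
    exact one_le_mul_of_one_le_of_one_le (one_le_mul_of_one_le_of_one_le h3 h4) h5
  rw [le_div_iff₀ (by positivity)]
  have h6 : (1:ℝ) ≤ Gamma4 ^ 6 := one_le_pow₀ hG4
  have h7 : Gamma5 ^ 3 ≤ (1 / 400) ^ 3 := pow_le_pow_left₀ hG5.le hG5' 3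
  norm_num at h7
  linarith

lemma exists_m (n : ℕ) (hn : 2 ≤ n) : ∃ m : ℕ, 0 < m ∧ 2 * m ^ 3 ≤ n ∧ n ≤ 16 * m ^ 3 := by
  let P : ℕ → Prop := fun k => 2 * k ^ 3 ≤ n
  have h1 : P 1 := by simp [P, hn]
  have h1n : 1 ≤ n := by omega
  have hP := Nat.findGreatest_spec (P := P) h1n h1
  have hle := Nat.le_findGreatest (P := P) h1n h1
  set m := Nat.findGreatest P n
  refine ⟨m, hle, hP, ?_⟩
  have hnot : ¬ P (m + 1) := by
    intro h
    have hmn : m + 1 ≤ n := by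
      have : m + 1 ≤ (m + 1) ^ 3 := Nat.le_self_pow (by norm_num) _
      simp only [P] at h
      omega
    have := Nat.le_findGreatest (P := P) hmn h
    change m + 1 ≤ m at this
    omega
  simp only [P, not_le] at hnot
  have : (m + 1) ^ 3 ≤ (2 * m) ^ 3 := Nat.pow_le_pow_left (by omega) 3
  have e : (2 * m) ^ 3 = 8 * m ^ 3 := by ring
  omega

open scoped Classical in
theorem stmt_13 (Ω : Set E3) (a : E3) (L : ℝ) (hL : 0 < L)
    (hΩ : Ω = {x : E3 | ∀ i, x i ∈ Set.Icc (a i) (a i + L)}) (hΩQ : Ω ⊆ Qcube) :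
    ∀ᶠ n : ℕ in Filter.atTop, ∀ Y : Finset E3, IsMinimizer n Y →
      (∑ y ∈ Y.filter (fun y => (vorCell Y y ∩ frontier Ω).Nonempty),
          ∫ x in vorCell Y y, dist x y ^ 2) ≤
        (3 * Gamma4 ^ 6 / (4 * Gamma5 ^ 3)) * (n : ℝ)⁻¹ := by

  filter_upwards [Filter.eventually_ge_atTop 2] with n hn Y hY
  obtain ⟨m, hm, hmn, hnm⟩ := exists_m n hn
  have hm' : (0:ℝ) < m := by exact_mod_cast hm
  have hn' : (0:ℝ) < n := by exact_mod_cast (by omega : 0 < n)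
  let δ : ℝ := 14 / m
  have hδ : 0 ≤ δ := by positivity
  let U : Set E3 := ⋃ i : Fin 3, (slabS i (a i) δ ∪ slabS i (a i + L) δ)
  let T : Set E3 := Qcube ∩ U
  have hUv : volume.real U ≤ 12 * δ := by
    calc volume.real U ≤ ∑ i : Fin 3, volume.real (slabS i (a i) δ ∪ slabS i (a i + L) δ) :=
          measureReal_iUnion_fintype_le _
      _ ≤ ∑ i : Fin 3, 4 * δ := Finset.sum_le_sum fun i _ => by
          refine (measureReal_union_le _ _).trans ?_
          rw [slabS_real _ _ _ hδ, slabS_real _ _ _ hδ]; linarith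
      _ = 12 * δ := by simp; ring
  have hUf : volume U ≠ ⊤ := by
    refine ((measure_iUnion_fintype_le volume _).trans_lt ?_).ne
    refine ENNReal.sum_lt_top.2 fun i _ => (measure_union_lt_top ?_ ?_)
    · exact (slabS_top _ _ _).lt_top
    · exact (slabS_top _ _ _).lt_top
  have hTf : volume T < ⊤ := (measure_mono Set.inter_subset_right).trans_lt hUf.lt_top
  have hTv : volume.real T ≤ 12 * δ :=
    (measureReal_mono Set.inter_subset_right hUf).trans hUv
  set F := Y.filter (fun y => (vorCell Y y ∩ frontier Ω).Nonempty) with hF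
  have hFY : F ⊆ Y := Finset.filter_subset _ _
  have hFT : ∀ y ∈ F, vorCell Y y ⊆ T := by
    intro y hy x hx
    obtain ⟨hyY, p, hpV, hpF⟩ := Finset.mem_filter.1 hy
    rw [hΩ] at hpF
    obtain ⟨i, hi⟩ := frontier_coord hpF
    have r1 : dist x y ≤ 7 / m := by
      rw [vor_infDist hyY hx]; exact radius_bound hm hmn hY hx.1
    have r2 : dist p y ≤ 7 / m := by
      rw [vor_infDist hyY hpV]; exact radius_bound hm hmn hY hpV.1
    have r3 : |x i - p i| ≤ δ := by
      refine (coord_le_dist x p i).trans ((dist_triangle_right x p y).trans ?_)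
      have : δ = 7 / m + 7 / m := by simp only [δ]; ring
      linarith
    refine ⟨hx.1, Set.mem_iUnion.2 ⟨i, ?_⟩⟩
    rcases hi with hi | hi
    · left; rw [hi] at r3; exact mem_slabS hx.1 r3
    · right; rw [hi] at r3; exact mem_slabS hx.1 r3
  have hsum : ∑ y ∈ F, ∫ x in vorCell Y y, dist x y ^ 2
      = ∑ y ∈ F, ∫ x in vorCell Y y, (Metric.infDist x (↑Y : Set E3)) ^ 2 := by
    refine Finset.sum_congr rfl fun y hy => ?_
    refine setIntegral_congr_fun (vorCell_closed Y y).measurableSet fun x hx => ?_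
    simp only [vor_infDist (hFY hy) hx]
  have hle := sum_vor_le (infDist_sq_int Y) (fun x => by positivity) F hFY T
    Set.inter_subset_left hFT
  have hT2 : ∫ x in T, (Metric.infDist x (↑Y : Set E3)) ^ 2 ≤ (7 / m) ^ 2 * volume.real T := by
    refine (Real.le_norm_self _).trans (norm_setIntegral_le_of_norm_le_const hTf fun x hx => ?_)
    rw [Real.norm_eq_abs, abs_of_nonneg (by positivity)]
    exact pow_le_pow_left₀ Metric.infDist_nonneg (radius_bound hm hmn hY hx.1) 2
  have hnm' : (n:ℝ) ≤ 16 * (m:ℝ) ^ 3 := by exact_mod_cast hnm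
  calc ∑ y ∈ F, ∫ x in vorCell Y y, dist x y ^ 2
      ≤ (7 / m) ^ 2 * volume.real T := by rw [hsum]; exact hle.trans hT2
    _ ≤ (7 / m) ^ 2 * (12 * δ) := by gcongr
    _ = 8232 / (m:ℝ) ^ 3 := by simp only [δ]; field_simp; norm_num
    _ ≤ 131712 * (n:ℝ)⁻¹ := by
        rw [← div_eq_mul_inv, div_le_div_iff₀ (by positivity) hn']
        linarith
    _ ≤ _ := by
        gcongr
        exact const_bound
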